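/- arXiv:2512.10541 — 2 statements merged into one kernel-verified Lean document; each statement's English description precedes it below -/
import Mathlib

section
/- Let α, β ∈ ℝ with 0 ≤ β ≤ α, let n, u ∈ ℝ³ be unit vectors, and let r ∈ ℝ. Define S1 := ((√(α+β)+√(α−β))/2) • 1 + ((√(α+β)−√(α−β))/2) • σ_n and ρ := (1/2) • (1 + r • σ_u). Then 2 • (S1 * ρ * S1) = (α + r·β·(n ⬝ u)) • 1 + (r·√(α²−β²)) • σ_u + (β + r·(α − √(α²−β²))·(n ⬝ u)) • σ_n. Equivalently, the selective post-measurement state conditioned on outcome E1 is Q1⁻¹ times this matrix divided by 2, where Q1 = α + rβ(n ⬝ u). -/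
open Matrix

noncomputable def σx : Matrix (Fin 2) (Fin 2) ℂ := !![0, 1; 1, 0]
noncomputable def σy : Matrix (Fin 2) (Fin 2) ℂ := !![0, -Complex.I; Complex.I, 0]
noncomputable def σz : Matrix (Fin 2) (Fin 2) ℂ := !![1, 0; 0, -1]

/-- For `v = (v1, v2, v3) ∈ ℝ³`, `σ_v := v1 • σx + v2 • σy + v3 • σz`. -/
noncomputable def pauliVec (v : Fin 3 → ℝ) : Matrix (Fin 2) (Fin 2) ℂ :=
  v 0 • σx + v 1 • σy + v 2 • σz

/-- Euclidean inner product on ℝ³. -/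
def dot3 (v w : Fin 3 → ℝ) : ℝ := v 0 * w 0 + v 1 * w 1 + v 2 * w 2

/-- The anticommutator of two Pauli vectors is twice their inner product. -/
theorem pauliVec_mul_add_mul (v w : Fin 3 → ℝ) :
    pauliVec v * pauliVec w + pauliVec w * pauliVec v
      = (2 * dot3 v w) • (1 : Matrix (Fin 2) (Fin 2) ℂ) := by
  ext i j
  fin_cases i <;> fin_cases j <;>
    simp [pauliVec, dot3, σx, σy, σz] <;>
    first
    | ring1
    | linear_combination (-2 * (v 1 : ℂ) * w 1) * Complex.I_sq

theorem pauliVec_mul_self {v : Fin 3 → ℝ} (hv : v 0 ^ 2 + v 1 ^ 2 + v 2 ^ 2 = 1) :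
    pauliVec v * pauliVec v = 1 := by
  have hdot : dot3 v v = 1 := by rw [← hv, dot3]; ring
  have h := pauliVec_mul_add_mul v v
  rw [hdot, mul_one, ← two_smul ℝ] at h
  exact smul_right_injective _ (two_ne_zero (α := ℝ)) h

/-- Conjugating `1 + r • U` by `a • 1 + b • N`, where `N` is an involution whose anticommutator
with `U` is the scalar `2 * d`. -/
theorem conj_one_add_smul {A : Type*} [Ring A] [Algebra ℝ A] (a b r d : ℝ) {N U : A}
    (hN : N * N = 1) (hNU : N * U + U * N = (2 * d) • (1 : A)) :
    (a • (1 : A) + b • N) * (1 + r • U) * (a • (1 : A) + b • N)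
      = (a ^ 2 + b ^ 2 + r * (2 * a * b) * d) • (1 : A) + (r * (a ^ 2 - b ^ 2)) • U
        + (2 * a * b + r * (2 * b ^ 2) * d) • N := by
  have hUN : U * N = (2 * d) • (1 : A) - N * U := eq_sub_of_add_eq' hNU
  have hNUN : N * U * N = (2 * d) • N - U := by
    rw [mul_assoc, hUN, mul_sub, ← mul_assoc, hN, mul_smul_comm, mul_one, one_mul]
  simp only [mul_add, add_mul, smul_mul_assoc, mul_smul_comm, one_mul, mul_one, hN, hNUN, hUN]
  module

theorem stmt_3 (α β r : ℝ) (hβ0 : 0 ≤ β) (hβα : β ≤ α)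
    (n u : Fin 3 → ℝ)
    (hn : n 0 ^ 2 + n 1 ^ 2 + n 2 ^ 2 = 1)
    (hu : u 0 ^ 2 + u 1 ^ 2 + u 2 ^ 2 = 1)
    (S1 ρ : Matrix (Fin 2) (Fin 2) ℂ)
    (hS1 : S1 = ((Real.sqrt (α + β) + Real.sqrt (α - β)) / 2) • (1 : Matrix (Fin 2) (Fin 2) ℂ)
        + ((Real.sqrt (α + β) - Real.sqrt (α - β)) / 2) • pauliVec n)
    (hρ : ρ = (1 / 2 : ℝ) • ((1 : Matrix (Fin 2) (Fin 2) ℂ) + r • pauliVec u)) :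
    (2 : ℝ) • (S1 * ρ * S1)
      = (α + r * β * dot3 n u) • (1 : Matrix (Fin 2) (Fin 2) ℂ)
        + (r * Real.sqrt (α ^ 2 - β ^ 2)) • pauliVec u
        + (β + r * (α - Real.sqrt (α ^ 2 - β ^ 2)) * dot3 n u) • pauliVec n := by
  have hp : Real.sqrt (α + β) ^ 2 = α + β := Real.sq_sqrt (by linarith)
  have hm : Real.sqrt (α - β) ^ 2 = α - β := Real.sq_sqrt (by linarith)
  have hpm : Real.sqrt (α ^ 2 - β ^ 2) = Real.sqrt (α + β) * Real.sqrt (α - β) := by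
    rw [← Real.sqrt_mul (by linarith), sq_sub_sq]
  rw [hS1, hρ, mul_smul_comm, smul_mul_assoc, smul_smul, mul_one_div_cancel two_ne_zero, one_smul,
    conj_one_add_smul _ _ r (dot3 n u) (pauliVec_mul_self hn) (pauliVec_mul_add_mul n u), hpm]
  congr 1
  · congr 2
    · linear_combination (1 / 2 + r * dot3 n u / 2) * hp + (1 / 2 - r * dot3 n u / 2) * hm
    · ring
  · congr 1
    linear_combination (1 / 2 + r * dot3 n u / 2) * hp + (r * dot3 n u / 2 - 1 / 2) * hm
end

section
/- (Theorem 2 of the paper.) Let λ0, λ1 ∈ ℝ with λ0 > 0, λ1 > 0, λ0 + λ1 = 1 and λ0 ≠ λ1, and ρ := Matrix.diagonal ![ (λ0 : ℂ), (λ1 : ℂ) ]. Let A1, A2 be Hermitian 2×2 complex matrices with trace 0 (the derivatives of the encoded state with respect to the two parameters), with SLDs L1, L2 relative to ρ, and QFIM F. Then the following are equivalent: (i) Tr[ρ * (L1 * L2 − L2 * L1)] = 0 and det F ≠ 0 (the quantum Cramér–Rao bound is achievable and its QFIM is invertible); (ii) ((A1 0 1) * star (A2 0 1)).im = 0 (the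 off-diagonal matrix elements ⟨e0|A1|e1⟩ and ⟨e0|A2|e1⟩ are real multiples of one another) and A1 * A2 ≠ A2 * A1. -/
open Matrix

/-- The symmetric logarithmic derivative of `A` relative to `ρ = diagonal ![λ0, λ1]`,
defined entrywise by `L μ ν = 2 ⬝ A μ ν / (λμ + λν)`. -/
noncomputable def sld (l0 l1 : ℝ) (A : Matrix (Fin 2) (Fin 2) ℂ) : Matrix (Fin 2) (Fin 2) ℂ :=
  Matrix.of fun μ ν => 2 * A μ ν / ((![l0, l1] μ + ![l0, l1] ν : ℝ) : ℂ)

/-- The quantum Fisher information matrix of the pair of parameter-derivatives `A1, A2`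
at the state `ρ = diagonal ![λ0, λ1]`:
`F i j = Re ((1/2) · Tr[ρ (L_i L_j + L_j L_i)])` where `L_i` is the SLD of `A_i`. -/
noncomputable def qfim (l0 l1 : ℝ) (A1 A2 : Matrix (Fin 2) (Fin 2) ℂ) :
    Matrix (Fin 2) (Fin 2) ℝ :=
  Matrix.of fun i j =>
    ((1 / 2 : ℂ) * Matrix.trace (Matrix.diagonal ![(l0 : ℂ), (l1 : ℂ)] *
      (![sld l0 l1 A1, sld l0 l1 A2] i * ![sld l0 l1 A1, sld l0 l1 A2] j
        + ![sld l0 l1 A1, sld l0 l1 A2] j * ![sld l0 l1 A1, sld l0 l1 A2] i))).re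

/-- The traceless Hermitian `2 × 2` matrix with diagonal entries `a, -a` and upper right entry
`x + i y`. -/
noncomputable def blochMatrix (a x y : ℝ) : Matrix (Fin 2) (Fin 2) ℂ :=
  !![(a : ℂ), ⟨x, y⟩; ⟨x, -y⟩, -(a : ℂ)]

lemma Matrix.IsHermitian.exists_eq_blochMatrix {A : Matrix (Fin 2) (Fin 2) ℂ}
    (hA : A.IsHermitian) (htr : A.trace = 0) : ∃ a x y : ℝ, A = blochMatrix a x y := by
  have h00 : ((A 0 0).re : ℂ) = A 0 0 := hA.coe_re_apply_self 0
  have h10 : star (A 0 1) = A 1 0 := hA.apply 1 0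
  have h11 : A 1 1 = -A 0 0 := by
    rw [Matrix.trace_fin_two] at htr
    linear_combination htr
  refine ⟨(A 0 0).re, (A 0 1).re, (A 0 1).im, ?_⟩
  ext i j
  fin_cases i <;> fin_cases j
  · simp [blochMatrix, h00]
  · simp [blochMatrix]
  · simp [blochMatrix, ← h10, Complex.ext_iff]
  · simp [blochMatrix, h11, h00]

lemma sld_blochMatrix {l0 l1 : ℝ} (hsum : l0 + l1 = 1) (a x y : ℝ) :
    sld l0 l1 (blochMatrix a x y) =
      !![((a / l0 : ℝ) : ℂ), ⟨2 * x, 2 * y⟩; ⟨2 * x, -(2 * y)⟩, ((-(a / l1) : ℝ) : ℂ)] := by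
  have hsum' : l1 + l0 = 1 := by rw [add_comm, hsum]
  have hdiag : ∀ c l : ℂ, 2 * c / (l + l) = c / l := fun c l => by
    rw [← two_mul, mul_div_mul_left _ _ two_ne_zero]
  ext i j
  fin_cases i <;> fin_cases j
  · simp [sld, blochMatrix, hdiag]
  · simp [sld, blochMatrix, -Complex.ofReal_add, hsum, Complex.ext_iff]
  · simp [sld, blochMatrix, -Complex.ofReal_add, hsum', Complex.ext_iff]
  · simp only [sld, blochMatrix, of_apply, Fin.mk_one, cons_val', cons_val_one, cons_val_fin_one,
      Complex.ofReal_add, hdiag]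
    push_cast
    ring

lemma trace_mul_sld_commutator {l0 l1 : ℝ} (hsum : l0 + l1 = 1) (a x y b u v : ℝ) :
    Matrix.trace (Matrix.diagonal ![(l0 : ℂ), (l1 : ℂ)] *
      (sld l0 l1 (blochMatrix a x y) * sld l0 l1 (blochMatrix b u v)
        - sld l0 l1 (blochMatrix b u v) * sld l0 l1 (blochMatrix a x y))) =
      ((8 * (l0 - l1) * (y * u - x * v) : ℝ) : ℂ) * Complex.I := by
  rw [sld_blochMatrix hsum, sld_blochMatrix hsum, Complex.ext_iff]
  constructor <;> simp [Matrix.trace_fin_two, Matrix.mul_apply, Fin.sum_univ_two] <;> ring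

lemma qfim_apply_blochMatrix {l0 l1 : ℝ} (hl0 : l0 ≠ 0) (hl1 : l1 ≠ 0) (hsum : l0 + l1 = 1)
    (a x y b u v : ℝ) :
    ((1 / 2 : ℂ) * Matrix.trace (Matrix.diagonal ![(l0 : ℂ), (l1 : ℂ)] *
      (sld l0 l1 (blochMatrix a x y) * sld l0 l1 (blochMatrix b u v)
        + sld l0 l1 (blochMatrix b u v) * sld l0 l1 (blochMatrix a x y)))).re =
      a * b / (l0 * l1) + 4 * (x * u + y * v) := by
  rw [sld_blochMatrix hsum, sld_blochMatrix hsum]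
  simp [Matrix.trace_fin_two, Matrix.mul_apply, Fin.sum_univ_two]
  field_simp
  obtain rfl : l1 = 1 - l0 := by linarith
  ring

lemma det_qfim_blochMatrix {l0 l1 : ℝ} (hl0 : l0 ≠ 0) (hl1 : l1 ≠ 0) (hsum : l0 + l1 = 1)
    (a x y b u v : ℝ) :
    (qfim l0 l1 (blochMatrix a x y) (blochMatrix b u v)).det =
      4 / (l0 * l1) * ((a * u - b * x) ^ 2 + (a * v - b * y) ^ 2) + 16 * (y * u - x * v) ^ 2 := by
  rw [Matrix.det_fin_two]
  simp only [qfim, of_apply, cons_val_zero, cons_val_one, qfim_apply_blochMatrix hl0 hl1 hsum]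
  ring

lemma commute_blochMatrix_iff (a x y b u v : ℝ) :
    blochMatrix a x y * blochMatrix b u v = blochMatrix b u v * blochMatrix a x y ↔
      a * u - b * x = 0 ∧ a * v - b * y = 0 ∧ y * u - x * v = 0 := by
  rw [← Matrix.ext_iff]
  simp only [blochMatrix, Fin.forall_fin_two, Matrix.mul_apply, Fin.sum_univ_two, Complex.ext_iff]
  simp
  constructor
  · rintro ⟨⟨⟨-, h1⟩, h2, h3⟩, -⟩
    exact ⟨by linarith, by linarith, by linarith⟩
  · rintro ⟨h1, h2, h3⟩
    refine ⟨⟨⟨?_, ?_⟩, ?_, ?_⟩, ⟨?_, ?_⟩, ?_, ?_⟩ <;> linarith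

/-- Theorem 2 of the paper: for two-parameter estimation with qubit probes, the QFIM
associated with an achievable quantum Cramér–Rao bound is invertible iff the off-diagonal
elements of the parameter-derivatives are real multiples of one another and the
derivatives do not commute. -/
theorem stmt_10 (l0 l1 : ℝ) (hl0 : 0 < l0) (hl1 : 0 < l1) (hsum : l0 + l1 = 1)
    (hne : l0 ≠ l1)
    (ρ : Matrix (Fin 2) (Fin 2) ℂ) (hρ : ρ = Matrix.diagonal ![(l0 : ℂ), (l1 : ℂ)])
    (A1 A2 : Matrix (Fin 2) (Fin 2) ℂ)
    (hA1 : A1.IsHermitian) (hA2 : A2.IsHermitian)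
    (hA1tr : A1.trace = 0) (hA2tr : A2.trace = 0)
    (L1 L2 : Matrix (Fin 2) (Fin 2) ℂ) (hL1 : L1 = sld l0 l1 A1) (hL2 : L2 = sld l0 l1 A2) :
    (Matrix.trace (ρ * (L1 * L2 - L2 * L1)) = 0 ∧ (qfim l0 l1 A1 A2).det ≠ 0) ↔
      ((A1 0 1 * star (A2 0 1)).im = 0 ∧ A1 * A2 ≠ A2 * A1) := by
  obtain ⟨a, x, y, rfl⟩ := hA1.exists_eq_blochMatrix hA1tr
  obtain ⟨b, u, v, rfl⟩ := hA2.exists_eq_blochMatrix hA2tr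
  subst hρ hL1 hL2
  have him : (blochMatrix a x y 0 1 * star (blochMatrix b u v 0 1)).im = y * u - x * v := by
    simp [blochMatrix]
    ring
  have htrace : ((8 * (l0 - l1) * (y * u - x * v) : ℝ) : ℂ) * Complex.I = 0 ↔
      y * u - x * v = 0 := by
    simp only [mul_eq_zero, Complex.I_ne_zero, or_false, Complex.ofReal_eq_zero, sub_ne_zero.2 hne,
      OfNat.ofNat_ne_zero, false_or]
  rw [trace_mul_sld_commutator hsum, htrace, him, det_qfim_blochMatrix hl0.ne' hl1.ne' hsum, Ne, Ne,
    commute_blochMatrix_iff]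
  refine and_congr_right fun h => not_congr ?_
  have hpos : 4 / (l0 * l1) ≠ 0 := by positivity
  have hsq : (a * u - b * x) ^ 2 + (a * v - b * y) ^ 2 = 0 ↔
      a * u - b * x = 0 ∧ a * v - b * y = 0 := by
    rw [add_eq_zero_iff_of_nonneg (sq_nonneg _) (sq_nonneg _), sq_eq_zero_iff, sq_eq_zero_iff]
  simp [h, -mul_eq_zero, mul_eq_zero_iff_left hpos, hsq]
end
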